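/- arXiv:1707.05764 — 2 statements merged into one kernel-verified Lean document; each statement's English description precedes it below -/
import Mathlib

section
/- For every p ∈ (1,∞) there exist constants c1 = c1(p) > 0 and ε0 = ε0(p) > 0 with the following property. Let u, ũ, v : S^1 → S^1 be continuous maps lying in W^{1/p,p}(S^1;S^1), let ε ∈ (0, π/20) with ε ≤ ε0, and assume |u(x) − ũ(x)| ≤ ε for all x ∈ S^1, deg(u) = d1 and deg(v) = d2. Define C_ε^+ := {x ∈ S^1 : v(x)·conjugate(ũ(x)) ∈ A[−ε,ε]}, C_ε^− := {x ∈ S^1 : v(x)·conjugate(ũ(x)) ∈ A[π−ε, π+ε]}, C_ε := C_ε^+ ∪ C_ε^−, and D_ε := S^1×S^1 ∖ ((C_ε^+ × C_ε^+) ∪ (C_ε^− × C_ε^−)). Then E_p(v − ũ; D_ε) ≥ (1 − c1·ε^{1/2})·σ_p^p(d2 − d1) − c1·ε^{−p/2}·E_p(u; (S^1 ∖ C_ε) × S^1) − c1·ε^{p/2}·E_p(u; S^1 × S^1). -/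
open MeasureTheory Filter
open scoped ENNReal

noncomputable section

/-- Arc-length measure on the unit circle, realized as a measure on ℂ:
the pushforward of Lebesgue measure on `[0, 2π)` under `θ ↦ exp (θ i)`. -/
def circleMeasure : Measure ℂ :=
  Measure.map (fun θ : ℝ => Complex.exp (θ * Complex.I))
    (volume.restrict (Set.Ico 0 (2 * Real.pi)))

/-- The unit circle `S¹ ⊆ ℂ`. -/
def unitCircle : Set ℂ := Metric.sphere (0 : ℂ) 1

/-- Gagliardo `p`-energy of `f` over a subset `A ⊆ S¹ × S¹`. -/
def gEnergyOn (p : ℝ) (f : ℂ → ℂ) (A : Set (ℂ × ℂ)) : ℝ≥0∞ :=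
  ∫⁻ q in A, ENNReal.ofReal (‖f q.1 - f q.2‖ ^ p / ‖q.1 - q.2‖ ^ 2)
    ∂(circleMeasure.prod circleMeasure)

/-- Total Gagliardo `p`-energy `|f|_{W^{1/p,p}}^p` (as an extended real). -/
def gEnergy (p : ℝ) (f : ℂ → ℂ) : ℝ≥0∞ := gEnergyOn p f Set.univ

/-- The Gagliardo seminorm `|f|_{W^{1/p,p}}`. -/
def gSeminorm (p : ℝ) (f : ℂ → ℂ) : ℝ := (gEnergy p f).toReal ^ (1 / p)

/-- A continuous map `g : S¹ → S¹` has (winding) degree `d`: it lifts to a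
continuous `φ : [0, 2π] → ℝ` with `g (e^{iθ}) = e^{iφ(θ)}` and
`φ(2π) - φ(0) = 2πd`. -/
def HasDegree (g : ℂ → ℂ) (d : ℤ) : Prop :=
  ContinuousOn g unitCircle ∧ (∀ z ∈ unitCircle, g z ∈ unitCircle) ∧
    ∃ φ : ℝ → ℝ, ContinuousOn φ (Set.Icc 0 (2 * Real.pi)) ∧
      (∀ θ ∈ Set.Icc 0 (2 * Real.pi),
        g (Complex.exp (θ * Complex.I)) = Complex.exp (φ θ * Complex.I)) ∧
      φ (2 * Real.pi) - φ 0 = 2 * Real.pi * d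

/-- The class `𝓔_d ⊆ W^{1/p,p}(S¹;S¹)` of maps of (VMO-) degree `d`:
maps with values in `S¹` a.e., finite Gagliardo energy, approximable by
continuous degree-`d` circle maps of finite energy both in `L^p` and in the
Gagliardo seminorm. -/
def classE (p : ℝ) (d : ℤ) : Set (ℂ → ℂ) :=
  {f | AEMeasurable f circleMeasure ∧ (∀ᵐ x ∂circleMeasure, ‖f x‖ = 1) ∧
    gEnergy p f ≠ ⊤ ∧
    ∃ g : ℕ → ℂ → ℂ,
      (∀ k, HasDegree (g k) d ∧ gEnergy p (g k) ≠ ⊤) ∧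
      Tendsto (fun k => ∫ x, ‖f x - g k x‖ ^ p ∂circleMeasure) atTop (nhds 0) ∧
      Tendsto (fun k => gSeminorm p (fun x => f x - g k x)) atTop (nhds 0)}

/-- `σ_p(d)`: the minimal `W^{1/p,p}`-seminorm in the class `𝓔_d`. -/
def sigmaP (p : ℝ) (d : ℤ) : ℝ := sInf (gSeminorm p '' classE p d)

/-- `Dist_{W^{1/p,p}}(𝓔_{d₁}, 𝓔_{d₂}) = sup_{f ∈ 𝓔_{d₁}} inf_{g ∈ 𝓔_{d₂}} |f - g|_{W^{1/p,p}}`. -/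
def DistW (p : ℝ) (d1 d2 : ℤ) : ℝ :=
  sSup ((fun f => sInf ((fun g => gSeminorm p (fun x => f x - g x)) '' classE p d2))
    '' classE p d1)

end

/-- The closed arc `A[a,b] = {e^{iθ} : θ ∈ [a,b]}`. -/
def arcIcc (a b : ℝ) : Set ℂ :=
  (fun θ : ℝ => Complex.exp (θ * Complex.I)) '' Set.Icc a b

/-- `C_ε⁺`: points of `S¹` where `v·conj(ũ)` lies in the arc `A[-ε, ε]`. -/
def Cplus (utilde v : ℂ → ℂ) (ε : ℝ) : Set ℂ :=
  {x ∈ unitCircle | v x * (starRingEnd ℂ) (utilde x) ∈ arcIcc (-ε) ε}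

/-- `C_ε⁻`: points of `S¹` where `v·conj(ũ)` lies in the arc `A[π-ε, π+ε]`. -/
def Cminus (utilde v : ℂ → ℂ) (ε : ℝ) : Set ℂ :=
  {x ∈ unitCircle | v x * (starRingEnd ℂ) (utilde x) ∈ arcIcc (Real.pi - ε) (Real.pi + ε)}


/-- Soft threshold on the imaginary part. -/
def softR (δ : ℝ) (z : ℂ) : ℂ := ⟨z.re, z.im - max (-δ) (min δ z.im)⟩

lemma soft_abs (δ a b : ℝ) :
    |(a - max (-δ) (min δ a)) - (b - max (-δ) (min δ b))| ≤ |a - b| := by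
  grind

lemma softR_lip (δ : ℝ) (z w : ℂ) : ‖softR δ z - softR δ w‖ ≤ ‖z - w‖ := by
  rw [Complex.norm_eq_sqrt_sq_add_sq, Complex.norm_eq_sqrt_sq_add_sq]
  apply Real.sqrt_le_sqrt
  have h := sq_le_sq.2 (soft_abs δ z.im w.im)
  simp only [softR, Complex.sub_re, Complex.sub_im]
  linarith

lemma softR_near (δ : ℝ) (hδ : 0 ≤ δ) (z : ℂ) : ‖softR δ z - z‖ ≤ δ := by
  have h : softR δ z - z = ((-(max (-δ) (min δ z.im)) : ℝ) : ℂ) * Complex.I := by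
    apply Complex.ext <;> simp [softR]
  rw [h, norm_mul, Complex.norm_I, Complex.norm_real, Real.norm_eq_abs, mul_one]
  grind

lemma normalize_lip (r : ℝ) (hr : 0 < r) (a b : ℂ) (ha : r ≤ ‖a‖) (hb : r ≤ ‖b‖) :
    ‖a / (‖a‖ : ℂ) - b / (‖b‖ : ℂ)‖ ≤ ‖a - b‖ / r := by
  have ha0 : 0 < ‖a‖ := lt_of_lt_of_le hr ha
  have hb0 : 0 < ‖b‖ := lt_of_lt_of_le hr hb
  set α := ‖a‖ with hα
  set β := ‖b‖ with hβ
  have h1 : α ^ 2 = a.re ^ 2 + a.im ^ 2 := by rw [hα, Complex.sq_norm, Complex.normSq_apply]; ring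
  have h2 : β ^ 2 = b.re ^ 2 + b.im ^ 2 := by rw [hβ, Complex.sq_norm, Complex.normSq_apply]; ring
  rw [le_div_iff₀ hr]
  apply (sq_le_sq₀ (by positivity) (norm_nonneg _)).1
  rw [mul_pow, Complex.sq_norm, Complex.sq_norm, Complex.normSq_apply, Complex.normSq_apply]
  simp only [Complex.sub_re, Complex.sub_im, Complex.div_ofReal_re, Complex.div_ofReal_im]
  obtain ⟨x, hx⟩ : ∃ x, x = a.re / α := ⟨_, rfl⟩
  obtain ⟨y, hy⟩ : ∃ x, x = a.im / α := ⟨_, rfl⟩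
  obtain ⟨s, hs⟩ : ∃ x, x = b.re / β := ⟨_, rfl⟩
  obtain ⟨t, ht⟩ : ∃ x, x = b.im / β := ⟨_, rfl⟩
  have e1 : a.re = α * x := by rw [hx]; field_simp
  have e2 : a.im = α * y := by rw [hy]; field_simp
  have e3 : b.re = β * s := by rw [hs]; field_simp
  have e4 : b.im = β * t := by rw [ht]; field_simp
  rw [← hx, ← hy, ← hs, ← ht, e1, e2, e3, e4]
  rw [e1, e2] at h1
  rw [e3, e4] at h2
  have k1 : x ^ 2 + y ^ 2 = 1 := by
    have : α ^ 2 * (x ^ 2 + y ^ 2 - 1) = 0 := by linarith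
    rcases mul_eq_zero.1 this with h | h
    · exact absurd h (by positivity)
    · linarith
  have k2 : s ^ 2 + t ^ 2 = 1 := by
    have : β ^ 2 * (s ^ 2 + t ^ 2 - 1) = 0 := by linarith
    rcases mul_eq_zero.1 this with h | h
    · exact absurd h (by positivity)
    · linarith
  have hab : r ^ 2 ≤ α * β := by nlinarith
  have hN : 0 ≤ (x - s) ^ 2 + (y - t) ^ 2 := by positivity
  have key : (α * x - β * s) * (α * x - β * s) + (α * y - β * t) * (α * y - β * t)
      = (α - β) ^ 2 + α * β * ((x - s) ^ 2 + (y - t) ^ 2) := by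
    linear_combination (α ^ 2 - α * β) * k1 + (β ^ 2 - α * β) * k2
  rw [key]
  nlinarith [mul_le_mul_of_nonneg_right hab hN, sq_nonneg (α - β)]

/-- Normalized soft threshold. -/
noncomputable def softQ (δ : ℝ) (z : ℂ) : ℂ := softR δ z / (‖softR δ z‖ : ℂ)

lemma softQ_one (δ : ℝ) (z : ℂ) (h1 : |z.im| ≤ δ) (h2 : 0 < z.re) : softQ δ z = 1 := by
  have h : softR δ z = (z.re : ℂ) := by
    apply Complex.ext <;> simp [softR]
    grind
  rw [softQ, h, Complex.norm_real, Real.norm_eq_abs, abs_of_pos h2, div_self]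
  exact_mod_cast h2.ne'

lemma softQ_neg_one (δ : ℝ) (z : ℂ) (h1 : |z.im| ≤ δ) (h2 : z.re < 0) : softQ δ z = -1 := by
  have h : softR δ z = (z.re : ℂ) := by
    apply Complex.ext <;> simp [softR]
    grind
  rw [softQ, h, Complex.norm_real, Real.norm_eq_abs, abs_of_neg h2]
  have : (z.re : ℂ) ≠ 0 := by exact_mod_cast h2.ne
  push_cast
  field_simp

lemma exp_arc_norm (θ ε : ℝ) (h : |θ| ≤ ε) : ‖Complex.exp (θ * Complex.I) - 1‖ ≤ ε := by
  have := Real.norm_exp_I_mul_ofReal_sub_one_le (x := θ)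
  rw [mul_comm] at this
  exact this.trans h

lemma add_rpow_le (p : ℝ) (hp : 1 < p) (a b t : ℝ) (ha : 0 ≤ a) (hb : 0 ≤ b) (ht : 0 < t) :
    (a + b) ^ p ≤ (1 + t) ^ p * a ^ p + (1 + 1 / t) ^ p * b ^ p := by
  have hp0 : 0 ≤ p := by linarith
  rw [← Real.mul_rpow (by positivity) ha, ← Real.mul_rpow (by positivity) hb]
  rcases le_total b (t * a) with h | h
  · have : (a + b) ^ p ≤ ((1 + t) * a) ^ p :=
      Real.rpow_le_rpow (by positivity) (by linarith) hp0
    have h2 : 0 ≤ ((1 + 1 / t) * b) ^ p := by positivity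
    linarith
  · have h3 : a ≤ b / t := by rw [le_div_iff₀ ht]; linarith
    have : (a + b) ^ p ≤ ((1 + 1 / t) * b) ^ p :=
      Real.rpow_le_rpow (by positivity) (by rw [add_mul, one_div, inv_mul_eq_div]; linarith) hp0
    have h2 : 0 ≤ ((1 + t) * a) ^ p := by positivity
    linarith

instance circleMeasure_finite : IsFiniteMeasure circleMeasure := by
  unfold circleMeasure; infer_instance

lemma circleMeasure_ae : ∀ᵐ x ∂circleMeasure, x ∈ unitCircle := by
  unfold circleMeasure
  rw [ae_map_iff (by fun_prop) (by exact Metric.isClosed_sphere.measurableSet)]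
  refine Eventually.of_forall fun θ => ?_
  simp [unitCircle, Complex.norm_exp_ofReal_mul_I]

lemma prod_ae : ∀ᵐ q ∂(circleMeasure.prod circleMeasure), q.1 ∈ unitCircle ∧ q.2 ∈ unitCircle := by
  have h1 := Measure.quasiMeasurePreserving_fst (μ := circleMeasure) (ν := circleMeasure) |>.ae
    circleMeasure_ae
  have h2 := Measure.quasiMeasurePreserving_snd (μ := circleMeasure) (ν := circleMeasure) |>.ae
    circleMeasure_ae
  filter_upwards [h1, h2] with q a b using ⟨a, b⟩

lemma aem_of_cont (f : ℂ → ℂ) (hf : ContinuousOn f unitCircle) : AEMeasurable f circleMeasure := by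
  have h := hf.aemeasurable (μ := circleMeasure)
    (by exact Metric.isClosed_sphere.measurableSet : MeasurableSet unitCircle)
  rwa [Measure.restrict_eq_self_of_ae_mem circleMeasure_ae] at h

lemma aem_integrand (p : ℝ) (f : ℂ → ℂ) (hf : ContinuousOn f unitCircle) :
    AEMeasurable (fun q : ℂ × ℂ => ENNReal.ofReal (‖f q.1 - f q.2‖ ^ p / ‖q.1 - q.2‖ ^ 2))
      (circleMeasure.prod circleMeasure) := by
  have h := aem_of_cont f hf
  have h1 : AEMeasurable (fun q : ℂ × ℂ => f q.1) (circleMeasure.prod circleMeasure) :=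
    h.comp_quasiMeasurePreserving Measure.quasiMeasurePreserving_fst
  have h2 : AEMeasurable (fun q : ℂ × ℂ => f q.2) (circleMeasure.prod circleMeasure) :=
    h.comp_quasiMeasurePreserving Measure.quasiMeasurePreserving_snd
  fun_prop

lemma arc_closed (a b : ℝ) : IsClosed (arcIcc a b) :=
  (isCompact_Icc.image (by fun_prop)).isClosed

lemma set_closed (f : ℂ → ℂ) (hf : ContinuousOn f unitCircle) (A : Set ℂ) (hA : IsClosed A) :
    IsClosed {x ∈ unitCircle | f x ∈ A} :=
  hf.preimage_isClosed_of_isClosed Metric.isClosed_sphere hA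

lemma gEnergyOn_swap (p : ℝ) (f : ℂ → ℂ) (A B : Set ℂ) :
    gEnergyOn p f (A ×ˢ B) = gEnergyOn p f (B ×ˢ A) := by
  unfold gEnergyOn
  rw [← Measure.prod_restrict, ← Measure.prod_restrict, ← Measure.prod_swap]
  have h := MeasurableEmbedding.lintegral_map
    (μ := (circleMeasure.restrict B).prod (circleMeasure.restrict A))
    (MeasurableEquiv.prodComm (α := ℂ) (β := ℂ)).measurableEmbedding
    (fun q : ℂ × ℂ => ENNReal.ofReal (‖f q.1 - f q.2‖ ^ p / ‖q.1 - q.2‖ ^ 2))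
  refine Eq.trans h ?_
  refine lintegral_congr fun q => ?_
  simp [MeasurableEquiv.prodComm, norm_sub_rev]

/-- σ_p^p is at most the energy of a continuous map of degree `d`. -/
lemma sigma_le (p : ℝ) (hp : 1 < p) (d : ℤ) (f : ℂ → ℂ) (hf : HasDegree f d)
    (hE : gEnergy p f ≠ ⊤) : sigmaP p d ^ p ≤ (gEnergy p f).toReal := by
  have hmem : f ∈ classE p d := by
    refine ⟨aem_of_cont f hf.1, ?_, hE, fun _ => f, fun _ => ⟨hf, hE⟩, ?_, ?_⟩
    · filter_upwards [circleMeasure_ae] with x hx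
      simpa [unitCircle] using hf.2.1 x hx
    · have : p ≠ 0 := by linarith
      simp [Real.zero_rpow this]
    · have : p ≠ 0 := by linarith
      simp [gSeminorm, gEnergy, gEnergyOn, Real.zero_rpow this, Real.zero_rpow (inv_ne_zero this)]
  have hnn : ∀ y ∈ gSeminorm p '' classE p d, 0 ≤ y := by
    rintro _ ⟨g, -, rfl⟩
    unfold gSeminorm; positivity
  have h1 : sigmaP p d ≤ gSeminorm p f := csInf_le ⟨0, hnn⟩ ⟨f, hmem, rfl⟩
  have h0 : 0 ≤ sigmaP p d := Real.sInf_nonneg hnn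
  calc sigmaP p d ^ p ≤ gSeminorm p f ^ p := Real.rpow_le_rpow h0 h1 (by linarith)
    _ = _ := by
      unfold gSeminorm
      rw [← Real.rpow_mul ENNReal.toReal_nonneg, one_div_mul_cancel (by linarith), Real.rpow_one]

/-- Degree of a perturbation of `conj u * v`. -/
lemma degree_pert (u v f : ℂ → ℂ) (d1 d2 : ℤ) (hu : HasDegree u d1) (hv : HasDegree v d2)
    (hfc : ContinuousOn f unitCircle) (hf1 : ∀ z ∈ unitCircle, f z ∈ unitCircle)
    (hpos : ∀ z ∈ unitCircle, 0 < (f z * (u z * (starRingEnd ℂ) (v z))).re) :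
    HasDegree f (d2 - d1) := by
  obtain ⟨huc, hu1, φ, hφ, hφe, hφd⟩ := hu
  obtain ⟨hvc, hv1, ψ, hψ, hψe, hψd⟩ := hv
  refine ⟨hfc, hf1, ?_⟩
  have hE : ∀ θ : ℝ, Complex.exp (θ * Complex.I) ∈ unitCircle := by
    intro θ; simp [unitCircle, Complex.norm_exp_ofReal_mul_I]
  let g : ℂ → ℂ := fun z => f z * (u z * (starRingEnd ℂ) (v z))
  have hg : ContinuousOn g unitCircle :=
    hfc.mul (huc.mul (Complex.continuous_conj.comp_continuousOn hvc))
  have hgθ : Continuous (fun θ : ℝ => g (Complex.exp (θ * Complex.I))) :=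
    hg.comp_continuous (by fun_prop) hE
  have harg : Continuous (fun θ : ℝ => Complex.arg (g (Complex.exp (θ * Complex.I)))) := by
    rw [continuous_iff_continuousAt] at hgθ ⊢
    intro θ
    exact ContinuousAt.comp (g := Complex.arg) (f := fun θ : ℝ => g (Complex.exp (θ * Complex.I)))
      (Complex.continuousAt_arg (Or.inl (hpos _ (hE θ)))) (hgθ θ)
  refine ⟨fun θ => ψ θ - φ θ + Complex.arg (g (Complex.exp (θ * Complex.I))), ?_, ?_, ?_⟩
  · exact (hψ.sub hφ).add harg.continuousOn
  · intro θ hθ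
    have n1 : ‖g (Complex.exp (θ * Complex.I))‖ = 1 := by
      have a := hf1 _ (hE θ)
      have b := hu1 _ (hE θ)
      have c := hv1 _ (hE θ)
      simp only [unitCircle, mem_sphere_zero_iff_norm] at a b c
      simp only [g, norm_mul, a, b, RCLike.norm_conj, c]; norm_num
    have h1 := Complex.norm_mul_exp_arg_mul_I (g (Complex.exp (θ * Complex.I)))
    rw [n1] at h1
    push_cast
    rw [add_mul, sub_mul, Complex.exp_add, Complex.exp_sub, ← hψe θ hθ, ← hφe θ hθ]
    rw [Complex.ofReal_one, one_mul] at h1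
    rw [h1]
    have b := hu1 _ (hE θ)
    have c := hv1 _ (hE θ)
    simp only [unitCircle, mem_sphere_zero_iff_norm] at b c
    have hu0 : u (Complex.exp (θ * Complex.I)) ≠ 0 := by
      intro h; rw [h] at b; simp at b
    have hvv : v (Complex.exp (θ * Complex.I)) *
        (starRingEnd ℂ) (v (Complex.exp (θ * Complex.I))) = 1 := by
      rw [Complex.mul_conj, Complex.normSq_eq_norm_sq, c]; simp
    simp only [g]
    field_simp
    linear_combination -(f (Complex.exp (θ * Complex.I))) * hvv
  · have e : Complex.exp (((2 * Real.pi : ℝ) : ℂ) * Complex.I) = Complex.exp (((0 : ℝ) : ℂ) * Complex.I) := by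
      push_cast; rw [Complex.exp_two_pi_mul_I]; simp
    simp only [e]
    push_cast
    linarith

lemma int_pt (p A B a b c n : ℝ) (hA : 0 ≤ A) (hB : 0 ≤ B) (hb : 0 ≤ b) (hc : 0 ≤ c)
    (h : a ^ p ≤ A * b ^ p + B * c ^ p) :
    ENNReal.ofReal (a ^ p / n ^ 2) ≤ ENNReal.ofReal A * ENNReal.ofReal (b ^ p / n ^ 2)
      + ENNReal.ofReal B * ENNReal.ofReal (c ^ p / n ^ 2) := by
  rw [← ENNReal.ofReal_mul hA, ← ENNReal.ofReal_mul hB,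
    ← ENNReal.ofReal_add (by positivity) (by positivity)]
  apply ENNReal.ofReal_le_ofReal
  rw [← mul_div_assoc, ← mul_div_assoc, ← add_div]
  gcongr

/-- The integrated estimate from a pointwise one. -/
lemma energy_bound (p : ℝ) (f F u : ℂ → ℂ) (P M : Set ℂ) (A B : ℝ) (hA : 0 ≤ A) (hB : 0 ≤ B)
    (hp : 1 < p)
    (hFc : ContinuousOn F unitCircle) (huc : ContinuousOn u unitCircle)
    (hP : MeasurableSet P) (hM : MeasurableSet M)
    (hf1 : ∀ x ∈ P, f x = 1) (hf2 : ∀ x ∈ M, f x = -1)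
    (hgen : ∀ x ∈ unitCircle, ∀ y ∈ unitCircle,
      ‖f x - f y‖ ^ p ≤ A * ‖F x - F y‖ ^ p + B * ‖u x - u y‖ ^ p)
    (hPM : ∀ x ∈ P, ∀ y ∈ M, ‖f x - f y‖ ^ p ≤ A * ‖F x - F y‖ ^ p)
    (hMP : ∀ x ∈ M, ∀ y ∈ P, ‖f x - f y‖ ^ p ≤ A * ‖F x - F y‖ ^ p) :
    gEnergy p f ≤ ENNReal.ofReal A *
        gEnergyOn p F ((unitCircle ×ˢ unitCircle) \ ((P ×ˢ P) ∪ (M ×ˢ M)))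
      + ENNReal.ofReal B * (2 * gEnergyOn p u ((unitCircle \ (P ∪ M)) ×ˢ unitCircle)) := by
  have hS : MeasurableSet unitCircle := Metric.isClosed_sphere.measurableSet
  set D := (unitCircle ×ˢ unitCircle) \ ((P ×ˢ P) ∪ (M ×ˢ M)) with hD
  have hDm : MeasurableSet D := (hS.prod hS).diff ((hP.prod hP).union (hM.prod hM))
  set N := unitCircle \ (P ∪ M) with hN
  have hNm : MeasurableSet N := hS.diff (hP.union hM)
  have h2 : 2 * gEnergyOn p u (N ×ˢ unitCircle)
      = gEnergyOn p u (N ×ˢ unitCircle) + gEnergyOn p u (unitCircle ×ˢ N) := by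
    rw [gEnergyOn_swap p u unitCircle N, two_mul]
  rw [h2]
  have hFm := aem_integrand p F hFc
  have hum := aem_integrand p u huc
  unfold gEnergy gEnergyOn
  rw [← lintegral_indicator hDm, ← lintegral_indicator (hNm.prod hS),
    ← lintegral_indicator (hS.prod hNm), Measure.restrict_univ,
    ← lintegral_add_left' (hum.indicator (hNm.prod hS)),
    ← lintegral_const_mul' _ _ ENNReal.ofReal_ne_top,
    ← lintegral_const_mul' _ _ ENNReal.ofReal_ne_top,
    ← lintegral_add_left' ((hFm.indicator hDm).const_mul _)]
  apply lintegral_mono_ae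
  filter_upwards [prod_ae] with q hq
  obtain ⟨x, y⟩ := q
  obtain ⟨hx, hy⟩ := hq
  simp only at hx hy
  have hp0 : p ≠ 0 := by linarith
  by_cases hxy : (x, y) ∈ D
  · rw [Set.indicator_of_mem hxy]
    by_cases hn : x ∈ N ∨ y ∈ N
    · refine (int_pt p A B _ _ _ ‖x - y‖ hA hB (norm_nonneg _) (norm_nonneg _)
        (hgen x hx y hy)).trans ?_
      gcongr
      rcases hn with hn | hn
      · have : (x, y) ∈ N ×ˢ unitCircle := ⟨hn, hy⟩
        rw [Set.indicator_of_mem this]; exact le_self_add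
      · have : (x, y) ∈ unitCircle ×ˢ N := ⟨hx, hn⟩
        rw [Set.indicator_of_mem this]; exact le_add_self
    · have hb : ‖f x - f y‖ ^ p ≤ A * ‖F x - F y‖ ^ p := by
        simp only [hN, hD, Set.mem_sdiff, Set.mem_union, Set.mem_prod] at hn hxy
        have := hPM x; have := hMP x
        grind
      refine le_trans ?_ le_self_add
      have := int_pt p A 0 _ _ 0 ‖x - y‖ hA le_rfl (norm_nonneg _) le_rfl (by linarith :
        ‖f x - f y‖ ^ p ≤ A * ‖F x - F y‖ ^ p + 0 * (0 : ℝ) ^ p)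
      simpa using this
  · have hz : f x = f y := by
      simp only [hD, Set.mem_sdiff, Set.mem_union, Set.mem_prod] at hxy
      have := hf1 x; have := hf1 y; have := hf2 x; have := hf2 y
      grind
    simp [hz, Real.zero_rpow hp0]

set_option maxHeartbeats 4000000 in
/-- **Lemma 3.1 (key lemma).** For every `p ∈ (1,∞)` there are `c₁ = c₁(p) > 0` and
`ε₀ = ε₀(p) > 0` such that for all continuous circle maps `u, ũ, v ∈ W^{1/p,p}(S¹;S¹)`,
every `ε ∈ (0, π/20)` with `ε ≤ ε₀` and `|u - ũ| ≤ ε` on `S¹`, `deg u = d₁`,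
`deg v = d₂`, setting `C_ε = C_ε⁺ ∪ C_ε⁻` and
`D_ε = S¹×S¹ \ ((C_ε⁺ × C_ε⁺) ∪ (C_ε⁻ × C_ε⁻))`, one has
`E_p(v - ũ; D_ε) ≥ (1 - c₁ ε^{1/2}) σ_p^p(d₂-d₁) - c₁ ε^{-p/2} E_p(u; (S¹ \ C_ε) × S¹)
 - c₁ ε^{p/2} E_p(u; S¹ × S¹)`. -/
theorem key_lemma (p : ℝ) (hp : 1 < p) :
    ∃ c1 ε0 : ℝ, 0 < c1 ∧ 0 < ε0 ∧
      ∀ (u utilde v : ℂ → ℂ) (ε : ℝ) (d1 d2 : ℤ),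
        ContinuousOn u unitCircle → ContinuousOn utilde unitCircle →
        ContinuousOn v unitCircle →
        (∀ z ∈ unitCircle, u z ∈ unitCircle) →
        (∀ z ∈ unitCircle, utilde z ∈ unitCircle) →
        (∀ z ∈ unitCircle, v z ∈ unitCircle) →
        gEnergy p u ≠ ⊤ → gEnergy p utilde ≠ ⊤ → gEnergy p v ≠ ⊤ →
        0 < ε → ε < Real.pi / 20 → ε ≤ ε0 →
        (∀ x ∈ unitCircle, ‖u x - utilde x‖ ≤ ε) →
        HasDegree u d1 → HasDegree v d2 →
        ENNReal.ofReal ((1 - c1 * ε ^ ((1 : ℝ) / 2)) * sigmaP p (d2 - d1) ^ p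
            - c1 * ε ^ (-(p / 2)) *
              (gEnergyOn p u
                ((unitCircle \ (Cplus utilde v ε ∪ Cminus utilde v ε)) ×ˢ unitCircle)).toReal
            - c1 * ε ^ (p / 2) * (gEnergyOn p u (unitCircle ×ˢ unitCircle)).toReal) ≤
          gEnergyOn p (fun x => v x - utilde x)
            ((unitCircle ×ˢ unitCircle) \
              ((Cplus utilde v ε ×ˢ Cplus utilde v ε) ∪
                (Cminus utilde v ε ×ˢ Cminus utilde v ε))) := by
  refine ⟨5 * p + 2 * 8 ^ p, 1 / 25, by positivity, by norm_num, ?_⟩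
  intro u w v ε d1 d2 huc hwc hvc hu1 hw1 hv1 hEu hEw hEv hε _ hε0 huw hdu hdv
  have hp0 : 0 < p := by linarith
  have nrm : ∀ {z : ℂ}, z ∈ unitCircle → ‖z‖ = 1 := fun h => by simpa [unitCircle] using h
  set c1 : ℝ := 5 * p + 2 * 8 ^ p with hc1
  set P := Cplus w v ε with hPdef
  set M := Cminus w v ε with hMdef
  set F : ℂ → ℂ := fun x => v x - w x with hF
  set D := (unitCircle ×ˢ unitCircle) \ ((P ×ˢ P) ∪ (M ×ˢ M)) with hD
  set N := unitCircle \ (P ∪ M) with hN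
  have hFc : ContinuousOn F unitCircle := hvc.sub hwc
  have hvw : ContinuousOn (fun x => v x * (starRingEnd ℂ) (w x)) unitCircle :=
    hvc.mul (Complex.continuous_conj.comp_continuousOn hwc)
  have hPm : MeasurableSet P := (set_closed _ hvw _ (arc_closed _ _)).measurableSet
  have hMm : MeasurableSet M := (set_closed _ hvw _ (arc_closed _ _)).measurableSet
  set s : ℝ := ε ^ ((1 : ℝ) / 2) with hs
  have hs0 : 0 < s := by positivity
  have hss : s * s = ε := by
    rw [hs, ← Real.rpow_add hε]; norm_num
  have hs5 : s ≤ 1 / 5 := by nlinarith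
  -- the auxiliary map
  set W : ℂ → ℂ := fun x => (starRingEnd ℂ) (u x) * F x + 1 with hW
  set f : ℂ → ℂ := fun x => softQ (3 * ε) (W x) with hf
  have huu : ∀ x ∈ unitCircle, (starRingEnd ℂ) (u x) * u x = 1 := by
    intro x hx
    rw [mul_comm, Complex.mul_conj, Complex.normSq_eq_norm_sq, nrm (hu1 x hx)]; simp
  have hvv : ∀ x ∈ unitCircle, (starRingEnd ℂ) (v x) * v x = 1 := by
    intro x hx
    rw [mul_comm, Complex.mul_conj, Complex.normSq_eq_norm_sq, nrm (hv1 x hx)]; simp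
  have hww : ∀ x ∈ unitCircle, (starRingEnd ℂ) (w x) * w x = 1 := by
    intro x hx
    rw [mul_comm, Complex.mul_conj, Complex.normSq_eq_norm_sq, nrm (hw1 x hx)]; simp
  have hnear : ∀ x ∈ unitCircle,
      ‖softR (3 * ε) (W x) - (starRingEnd ℂ) (u x) * v x‖ ≤ 4 * ε := by
    intro x hx
    have h1 := softR_near (3 * ε) (by positivity) (W x)
    have h2 : ‖W x - (starRingEnd ℂ) (u x) * v x‖ ≤ ε := by
      have : W x - (starRingEnd ℂ) (u x) * v x = (starRingEnd ℂ) (u x) * (u x - w x) := by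
        simp only [hW, hF]; linear_combination -(huu x hx)
      rw [this, norm_mul, RCLike.norm_conj, nrm (hu1 x hx), one_mul]
      exact huw x hx
    have := norm_sub_le_norm_sub_add_norm_sub (softR (3 * ε) (W x)) (W x)
      ((starRingEnd ℂ) (u x) * v x)
    linarith
  have hrpos : 0 < 1 - 4 * ε := by linarith
  have hRn : ∀ x ∈ unitCircle, 1 - 4 * ε ≤ ‖softR (3 * ε) (W x)‖ := by
    intro x hx
    have h1 := norm_sub_norm_le ((starRingEnd ℂ) (u x) * v x) (softR (3 * ε) (W x))
    rw [norm_sub_rev, norm_mul, RCLike.norm_conj, nrm (hu1 x hx), nrm (hv1 x hx)] at h1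
    have := hnear x hx
    linarith
  have hWc : ContinuousOn W unitCircle :=
    ((Complex.continuous_conj.comp_continuousOn huc).mul hFc).add continuousOn_const
  have hRcont : Continuous (softR (3 * ε)) := by
    refine (LipschitzWith.of_dist_le_mul (K := 1) fun a b => ?_).continuous
    rw [dist_eq_norm, dist_eq_norm]; simpa using softR_lip (3 * ε) a b
  have hRc : ContinuousOn (fun x => softR (3 * ε) (W x)) unitCircle :=
    hRcont.comp_continuousOn hWc
  have hfc : ContinuousOn f unitCircle := by
    refine hRc.div (Complex.continuous_ofReal.comp_continuousOn hRc.norm) ?_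
    intro x hx
    have := hRn x hx
    exact_mod_cast (by linarith : (0 : ℝ) < _).ne'
  have hf1 : ∀ x ∈ unitCircle, f x ∈ unitCircle := by
    intro x hx
    have h0 : ‖softR (3 * ε) (W x)‖ ≠ 0 := by have := hRn x hx; linarith
    simp only [unitCircle, mem_sphere_zero_iff_norm, hf, softQ]
    rw [norm_div, Complex.norm_real, norm_norm, div_self h0]
  have hdeg : HasDegree f (d2 - d1) := by
    refine degree_pert u v f d1 d2 hdu hdv hfc hf1 ?_
    intro x hx
    have hr := hRn x hx
    set R := softR (3 * ε) (W x) with hR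
    have e : f x * (u x * (starRingEnd ℂ) (v x))
        = (R * (u x * (starRingEnd ℂ) (v x))) / (‖R‖ : ℂ) := by
      simp only [hf, softQ, ← hR]; ring
    rw [e, Complex.div_ofReal_re]
    apply div_pos _ (by linarith)
    have e2 : R * (u x * (starRingEnd ℂ) (v x))
        = 1 + (R - (starRingEnd ℂ) (u x) * v x) * (u x * (starRingEnd ℂ) (v x)) := by
      linear_combination (u x * (starRingEnd ℂ) (u x)) * hvv x hx + huu x hx
    rw [e2, Complex.add_re, Complex.one_re]
    have h3 := Complex.abs_re_le_norm
      ((R - (starRingEnd ℂ) (u x) * v x) * (u x * (starRingEnd ℂ) (v x)))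
    rw [norm_mul, norm_mul, RCLike.norm_conj, nrm (hu1 x hx), nrm (hv1 x hx), one_mul,
      mul_one] at h3
    have h4 := hnear x hx
    have h5 := abs_le.1 (h3.trans h4)
    linarith [h5.1]
  -- behaviour on the two contact sets
  have hPF : ∀ x ∈ P, ‖F x‖ ≤ ε := by
    rintro x ⟨hx, θ, hθ, he⟩
    have e : F x = (Complex.exp (θ * Complex.I) - 1) * w x := by
      simp only at he
      rw [he]; simp only [hF]; linear_combination -(v x) * hww x hx
    rw [e, norm_mul, nrm (hw1 x hx), mul_one]
    exact exp_arc_norm θ ε (abs_le.2 hθ)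
  have hMF : ∀ x ∈ M, ‖F x + 2 * w x‖ ≤ ε := by
    rintro x ⟨hx, θ, hθ, he⟩
    have e0 : Complex.exp (θ * Complex.I) = -Complex.exp (((θ - Real.pi : ℝ) : ℂ) * Complex.I) := by
      push_cast
      rw [sub_mul, Complex.exp_sub, Complex.exp_pi_mul_I, div_neg, div_one, neg_neg]
    have e : F x + 2 * w x
        = -(Complex.exp (((θ - Real.pi : ℝ) : ℂ) * Complex.I) - 1) * w x := by
      have : Complex.exp (((θ - Real.pi : ℝ) : ℂ) * Complex.I)
          = - (v x * (starRingEnd ℂ) (w x)) := by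
        simp only at he
        rw [← he, e0, neg_neg]
      rw [this]; simp only [hF]; linear_combination -(v x) * hww x hx
    rw [e, norm_mul, norm_neg, nrm (hw1 x hx), mul_one]
    refine exp_arc_norm _ ε (abs_le.2 ⟨?_, ?_⟩) <;> linarith [hθ.1, hθ.2]
  have hPS : ∀ x ∈ P, x ∈ unitCircle := fun x hx => hx.1
  have hMS : ∀ x ∈ M, x ∈ unitCircle := fun x hx => hx.1
  have hfP : ∀ x ∈ P, f x = 1 := by
    intro x hx
    have hxS := hPS x hx
    have h1 : ‖W x - 1‖ ≤ ε := by
      have : W x - 1 = (starRingEnd ℂ) (u x) * F x := add_sub_cancel_right _ _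
      rw [this, norm_mul, RCLike.norm_conj, nrm (hu1 x hxS), one_mul]
      exact hPF x hx
    have a := (Complex.abs_re_le_norm (W x - 1)).trans h1
    have b := (Complex.abs_im_le_norm (W x - 1)).trans h1
    simp only [Complex.sub_re, Complex.sub_im, Complex.one_re, Complex.one_im, sub_zero] at a b
    apply softQ_one
    · linarith
    · linarith [(abs_le.1 a).1]
  have hfM : ∀ x ∈ M, f x = -1 := by
    intro x hx
    have hxS := hMS x hx
    have h1 : ‖W x + 1‖ ≤ 3 * ε := by
      have : W x + 1 = (starRingEnd ℂ) (u x) * ((F x + 2 * w x) + 2 * (u x - w x)) := by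
        simp only [hW]; linear_combination -2 * huu x hxS
      rw [this, norm_mul, RCLike.norm_conj, nrm (hu1 x hxS), one_mul]
      refine (norm_add_le _ _).trans ?_
      rw [norm_mul, Complex.norm_two]
      linarith [hMF x hx, huw x hxS]
    have a := (Complex.abs_re_le_norm (W x + 1)).trans h1
    have b := (Complex.abs_im_le_norm (W x + 1)).trans h1
    simp only [Complex.add_re, Complex.add_im, Complex.one_re, Complex.one_im, add_zero] at a b
    apply softQ_neg_one
    · linarith
    · linarith [(abs_le.1 a).2]
  -- constants
  set A : ℝ := ((1 + s) / (1 - 4 * ε)) ^ p with hA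
  set B : ℝ := 8 ^ p * ε ^ (-(p / 2)) with hB
  have hA0 : 0 ≤ A := by positivity
  have hB0 : 0 ≤ B := by positivity
  have hgen : ∀ x ∈ unitCircle, ∀ y ∈ unitCircle,
      ‖f x - f y‖ ^ p ≤ A * ‖F x - F y‖ ^ p + B * ‖u x - u y‖ ^ p := by
    intro x hx y hy
    have l1 := normalize_lip _ hrpos _ _ (hRn x hx) (hRn y hy)
    have l2 := softR_lip (3 * ε) (W x) (W y)
    have l3 : ‖W x - W y‖ ≤ ‖F x - F y‖ + 2 * ‖u x - u y‖ := by
      have e : W x - W y = (starRingEnd ℂ) (u x) * (F x - F y)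
          + (starRingEnd ℂ) (u x - u y) * F y := by
        simp only [hW, map_sub]; ring
      have hFy : ‖F y‖ ≤ 2 := by
        refine (norm_sub_le _ _).trans ?_
        rw [nrm (hv1 y hy), nrm (hw1 y hy)]; norm_num
      rw [e]
      refine (norm_add_le _ _).trans ?_
      rw [norm_mul, norm_mul, RCLike.norm_conj, RCLike.norm_conj, nrm (hu1 x hx), one_mul]
      nlinarith [norm_nonneg (u x - u y)]
    have l4 : ‖f x - f y‖ ≤ ‖F x - F y‖ / (1 - 4 * ε) + 2 * ‖u x - u y‖ / (1 - 4 * ε) := by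
      rw [← add_div]
      exact l1.trans (div_le_div_of_nonneg_right (l2.trans l3) hrpos.le)
    have l5 : 2 * ‖u x - u y‖ / (1 - 4 * ε) ≤ 4 * ‖u x - u y‖ := by
      rw [div_le_iff₀ hrpos]
      nlinarith [norm_nonneg (u x - u y)]
    have l6 := Real.rpow_le_rpow (norm_nonneg _) (l4.trans (by gcongr : _ ≤
      ‖F x - F y‖ / (1 - 4 * ε) + 4 * ‖u x - u y‖)) hp0.le
    refine l6.trans ((add_rpow_le p hp _ _ s (by positivity) (by positivity) hs0).trans ?_)
    apply add_le_add
    · rw [hA, ← Real.mul_rpow (by positivity) (by positivity),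
        ← Real.mul_rpow (by positivity) (by positivity)]
      apply le_of_eq; congr 1; ring
    · have hes : ε ^ (-(p / 2)) = (1 / s) ^ p := by
        rw [hs, one_div, ← Real.rpow_neg hε.le, ← Real.rpow_mul hε.le]
        congr 1; ring
      rw [hB, hes, ← Real.mul_rpow (by positivity) (by positivity),
        ← Real.mul_rpow (by positivity) (by positivity),
        ← Real.mul_rpow (by positivity) (by positivity)]
      apply Real.rpow_le_rpow (by positivity) _ hp0.le
      have : 1 ≤ 1 / s := by rw [le_div_iff₀ hs0]; linarith
      nlinarith [norm_nonneg (u x - u y)]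
  have hPM : ∀ x ∈ P, ∀ y ∈ M, ‖f x - f y‖ ^ p ≤ A * ‖F x - F y‖ ^ p := by
    intro x hx y hy
    rw [hA, ← Real.mul_rpow (by positivity) (by positivity)]
    apply Real.rpow_le_rpow (by positivity) _ hp0.le
    rw [hfP x hx, hfM y hy]
    have h2 : ‖(1 : ℂ) - -1‖ = 2 := by norm_num
    rw [h2]
    have h3 : 2 - 2 * ε ≤ ‖F x - F y‖ := by
      have e : 2 * w y = (F x - F y) - F x + (F y + 2 * w y) := by ring
      have h4 : ‖2 * w y‖ ≤ ‖F x - F y‖ + ‖F x‖ + ‖F y + 2 * w y‖ := by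
        rw [e]
        exact (norm_add_le _ _).trans (by simpa using norm_sub_le (F x - F y) (F x))
      rw [norm_mul, Complex.norm_two, nrm (hw1 y (hMS y hy))] at h4
      linarith [hPF x hx, hMF y hy]
    rw [div_mul_eq_mul_div, le_div_iff₀ hrpos]
    nlinarith
  have hMP : ∀ x ∈ M, ∀ y ∈ P, ‖f x - f y‖ ^ p ≤ A * ‖F x - F y‖ ^ p := by
    intro x hx y hy
    rw [norm_sub_rev (f x), norm_sub_rev (F x)]
    exact hPM y hy x hx
  have hbound := energy_bound p f F u P M A B hA0 hB0 hp hFc huc hPm hMm hfP hfM hgen hPM hMP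
  by_cases hT : gEnergyOn p F D = ⊤
  · rw [hT]; exact le_top
  have hU : gEnergyOn p u (N ×ˢ unitCircle) ≠ ⊤ :=
    ne_top_of_le_ne_top hEu (lintegral_mono_set (Set.subset_univ _))
  have hrhs : ENNReal.ofReal A * gEnergyOn p F D
      + ENNReal.ofReal B * (2 * gEnergyOn p u (N ×ˢ unitCircle)) ≠ ⊤ := by
    finiteness
  have hfin : gEnergy p f ≠ ⊤ := ne_top_of_le_ne_top hrhs hbound
  have hσ := sigma_le p hp _ f hdeg hfin
  have hb2 := ENNReal.toReal_mono hrhs hbound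
  rw [ENNReal.toReal_add (by finiteness) (by finiteness), ENNReal.toReal_mul, ENNReal.toReal_mul,
    ENNReal.toReal_mul, ENNReal.toReal_ofReal hA0, ENNReal.toReal_ofReal hB0,
    ENNReal.toReal_ofNat] at hb2
  have hσ2 := hσ.trans hb2
  rw [← ENNReal.ofReal_toReal hT]
  apply ENNReal.ofReal_le_ofReal
  set X := (gEnergyOn p F D).toReal with hX
  set Y := (gEnergyOn p u (N ×ˢ unitCircle)).toReal with hY
  set Z := (gEnergyOn p u (unitCircle ×ˢ unitCircle)).toReal with hZ
  have hX0 : 0 ≤ X := ENNReal.toReal_nonneg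
  have hY0 : 0 ≤ Y := ENNReal.toReal_nonneg
  have hZ0 : 0 ≤ Z := ENNReal.toReal_nonneg
  set σ := sigmaP p (d2 - d1) ^ p with hσdef
  have hσ0 : 0 ≤ σ := by
    apply Real.rpow_nonneg
    apply Real.sInf_nonneg
    rintro _ ⟨g, -, rfl⟩
    unfold gSeminorm; positivity
  have t1 : 0 ≤ c1 * ε ^ (p / 2) * Z := by positivity
  have t2 : 2 * B * Y ≤ c1 * ε ^ (-(p / 2)) * Y := by
    apply mul_le_mul_of_nonneg_right _ hY0
    have : 0 ≤ 5 * p * ε ^ (-(p / 2)) := by positivity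
    rw [hB, hc1]; linarith
  have t3 : 0 ≤ 2 * B * Y := by positivity
  rcases le_total (1 - c1 * s) 0 with hneg | hpos
  · nlinarith
  have hc1s : 0 ≤ c1 * s := by positivity
  have hAb : (1 - c1 * s) * A ≤ 1 := by
    have b1 := one_add_mul_self_le_rpow_one_add (s := -(5 * s)) (by linarith) hp.le
    have b2 : 1 - c1 * s ≤ (1 + -(5 * s)) ^ p := by
      have : 0 ≤ 2 * 8 ^ p * s := by positivity
      rw [hc1]; linarith
    calc (1 - c1 * s) * A ≤ (1 + -(5 * s)) ^ p * A := by gcongr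
      _ = ((1 + -(5 * s)) * ((1 + s) / (1 - 4 * ε))) ^ p := by
        rw [hA, ← Real.mul_rpow (by linarith) (by positivity)]
      _ ≤ 1 := by
        apply Real.rpow_le_one _ _ hp0.le
        · apply mul_nonneg (by linarith); positivity
        · rw [← mul_div_assoc, div_le_one hrpos]; nlinarith
  have h1 := mul_le_mul_of_nonneg_left hσ2 hpos
  have h2 : (1 - c1 * s) * A * X ≤ 1 * X := mul_le_mul_of_nonneg_right hAb hX0
  have h3 : (1 - c1 * s) * (2 * B * Y) ≤ 1 * (2 * B * Y) :=
    mul_le_mul_of_nonneg_right (by linarith) t3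
  nlinarith
end

section
/- For every p ∈ (1,∞) and every d ∈ ℤ, σ_p^p(d) ≤ |d|·σ_p^p(1). -/
open MeasureTheory Filter
open scoped ENNReal

/-! ### The circle measure -/

lemma measurable_cexp_line : Measurable (fun θ : ℝ => Complex.exp (θ * Complex.I)) := by
  fun_prop

lemma circle_push (t : ℝ) : MeasurePreserving (fun θ : ℝ => Complex.exp (θ * Complex.I))
    (volume.restrict (Set.Ioc t (t + 2 * Real.pi))) circleMeasure := by
  have : Fact (0 < 2 * Real.pi) := ⟨Real.two_pi_pos⟩
  have key : ∀ s : ℝ, Measure.map (fun θ : ℝ => Complex.exp (θ * Complex.I))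
      (volume.restrict (Set.Ioc s (s + 2 * Real.pi))) =
      Measure.map (fun x : AddCircle (2 * Real.pi) => (AddCircle.toCircle x : ℂ)) volume := by
    intro s
    rw [← (AddCircle.measurePreserving_mk (2 * Real.pi) s).map_eq, Measure.map_map]
    · congr 1
      ext θ
      simp [AddCircle.toCircle_apply_mk]
    · exact (continuous_subtype_val.comp AddCircle.continuous_toCircle).measurable
    · exact AddCircle.measurable_mk'
  refine ⟨measurable_cexp_line, ?_⟩
  rw [key t, ← key 0, circleMeasure, zero_add]
  congr 1
  exact Measure.restrict_congr_set Ico_ae_eq_Ioc.symm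

lemma circle_toCircle : haveI : Fact (0 < 2 * Real.pi) := ⟨Real.two_pi_pos⟩
    MeasurePreserving (fun x : AddCircle (2 * Real.pi) => (AddCircle.toCircle x : ℂ))
      volume circleMeasure := by
  have : Fact (0 < 2 * Real.pi) := ⟨Real.two_pi_pos⟩
  have hm : Measurable (fun x : AddCircle (2 * Real.pi) => (AddCircle.toCircle x : ℂ)) :=
    (continuous_subtype_val.comp AddCircle.continuous_toCircle).measurable
  refine ⟨hm, ?_⟩
  rw [← (circle_push 0).map_eq, ← (AddCircle.measurePreserving_mk (2 * Real.pi) 0).map_eq,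
    Measure.map_map hm AddCircle.measurable_mk']
  congr 1
  ext θ
  simp [AddCircle.toCircle_apply_mk]

instance circle_finite : IsFiniteMeasure circleMeasure := by
  unfold circleMeasure
  infer_instance

lemma circle_ae_norm : ∀ᵐ x ∂circleMeasure, ‖x‖ = 1 := by
  rw [circleMeasure, ae_map_iff measurable_cexp_line.aemeasurable
    (measurableSet_eq_fun (by fun_prop) (by fun_prop))]
  exact Filter.Eventually.of_forall fun θ => Complex.norm_exp_ofReal_mul_I θ

lemma circle_restrict : circleMeasure.restrict unitCircle = circleMeasure := by
  apply Measure.restrict_eq_self_of_ae_mem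
  filter_upwards [circle_ae_norm] with x hx
  simp [unitCircle, hx]

lemma circle_pow (n : ℕ) (hn : n ≠ 0) :
    MeasurePreserving (fun z : ℂ => z ^ n) circleMeasure circleMeasure := by
  have : Fact (0 < 2 * Real.pi) := ⟨Real.two_pi_pos⟩
  have h := circle_toCircle
  have hz := Measure.measurePreserving_zsmul (volume : Measure (AddCircle (2 * Real.pi)))
    (n := (n : ℤ)) (by exact_mod_cast hn)
  have hm : Measurable (fun z : ℂ => z ^ n) := by fun_prop
  refine ⟨hm, ?_⟩
  conv_lhs => rw [← h.map_eq]
  conv_rhs => rw [← h.map_eq, ← hz.map_eq]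
  rw [Measure.map_map hm h.measurable, Measure.map_map h.measurable hz.measurable]
  congr 1
  ext x
  simp [AddCircle.toCircle_nsmul]

lemma circle_rot (w : ℂ) (hw : ‖w‖ = 1) :
    MeasurePreserving (fun z : ℂ => w * z) circleMeasure circleMeasure := by
  have : Fact (0 < 2 * Real.pi) := ⟨Real.two_pi_pos⟩
  have h := circle_toCircle
  set a : AddCircle (2 * Real.pi) := ((Complex.arg w : ℝ) : AddCircle (2 * Real.pi)) with ha
  have haw : (AddCircle.toCircle a : ℂ) = w := by
    rw [ha, AddCircle.toCircle_apply_mk]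
    have := Complex.norm_mul_exp_arg_mul_I w
    simpa [hw] using this
  have hz := measurePreserving_add_left (volume : Measure (AddCircle (2 * Real.pi))) a
  have hm : Measurable (fun z : ℂ => w * z) := by fun_prop
  refine ⟨hm, ?_⟩
  conv_lhs => rw [← h.map_eq]
  conv_rhs => rw [← h.map_eq, ← hz.map_eq]
  rw [Measure.map_map hm h.measurable, Measure.map_map h.measurable hz.measurable]
  congr 1
  ext x
  simp [AddCircle.toCircle_add, haw]

/-! ### The kernel identity -/

lemma parseval_roots (n : ℕ) (hn : n ≠ 0) (w : ℂ) (hw : IsPrimitiveRoot w n) (a : ℕ → ℂ)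
    (ha : ∀ k, ‖a k‖ = 1) :
    ∑ j ∈ Finset.range n, ‖∑ k ∈ Finset.range n, a k * (w ^ j) ^ k‖ ^ 2 = (n : ℝ) ^ 2 := by
  have hwn : ‖w‖ = 1 := hw.norm'_eq_one hn
  have hw0 : w ≠ 0 := by intro h; simp [h] at hwn
  have hconj : (starRingEnd ℂ) w = w⁻¹ := by
    rw [Complex.inv_def, Complex.normSq_eq_norm_sq, hwn]; simp
  have haa : ∀ k, a k * (starRingEnd ℂ) (a k) = 1 := by
    intro k; rw [Complex.mul_conj, Complex.normSq_eq_norm_sq, ha]; simp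
  have orth : ∀ k ∈ Finset.range n, ∀ l ∈ Finset.range n,
      ∑ j ∈ Finset.range n, (w ^ j) ^ k * ((w⁻¹) ^ j) ^ l = if k = l then (n : ℂ) else 0 := by
    intro k hk l hl
    have hrw : ∀ j, (w ^ j) ^ k * ((w⁻¹) ^ j) ^ l = (w ^ k * (w⁻¹) ^ l) ^ j := by
      intro j; rw [mul_pow, ← pow_mul, ← pow_mul, ← pow_mul, ← pow_mul, mul_comm j k, mul_comm j l]
    simp_rw [hrw]
    split_ifs with h
    · subst h
      rw [← mul_pow, mul_inv_cancel₀ hw0]; simp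
    · have hne : w ^ k * (w⁻¹) ^ l ≠ 1 := by
        intro h1
        apply h
        apply hw.pow_inj (Finset.mem_range.1 hk) (Finset.mem_range.1 hl)
        rw [inv_pow] at h1
        field_simp at h1
        exact h1
      rw [geom_sum_eq hne]
      have : (w ^ k * (w⁻¹) ^ l) ^ n = 1 := by
        rw [mul_pow, ← pow_mul, ← pow_mul, mul_comm k, mul_comm l, pow_mul, pow_mul, inv_pow,
          hw.pow_eq_one]; simp
      rw [this]; simp
  have main : ∑ j ∈ Finset.range n, (∑ k ∈ Finset.range n, a k * (w ^ j) ^ k) *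
      (starRingEnd ℂ) (∑ k ∈ Finset.range n, a k * (w ^ j) ^ k) = (n : ℂ) ^ 2 := by
    simp_rw [map_sum, Finset.sum_mul_sum, map_mul, map_pow, hconj]
    rw [Finset.sum_comm]
    have : ∀ k ∈ Finset.range n, ∑ j ∈ Finset.range n, ∑ l ∈ Finset.range n,
        a k * (w ^ j) ^ k * ((starRingEnd ℂ) (a l) * ((w⁻¹) ^ j) ^ l) = n := by
      intro k hk
      rw [Finset.sum_comm]
      calc _ = ∑ l ∈ Finset.range n, a k * (starRingEnd ℂ) (a l) *
            (if k = l then (n : ℂ) else 0) := by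
            refine Finset.sum_congr rfl fun l hl => ?_
            rw [← orth k hk l hl, Finset.mul_sum]
            refine Finset.sum_congr rfl fun j _ => ?_
            ring
        _ = n := by
            simp only [mul_ite, mul_zero, Finset.sum_ite_eq, hk, if_true, haa, one_mul]
    rw [Finset.sum_congr rfl this]
    simp [sq]
  have : ((∑ j ∈ Finset.range n, ‖∑ k ∈ Finset.range n, a k * (w ^ j) ^ k‖ ^ 2 : ℝ) : ℂ)
      = ((n : ℝ) ^ 2 : ℝ) := by
    rw [Complex.ofReal_sum]
    push_cast
    rw [← main]
    refine Finset.sum_congr rfl fun j _ => ?_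
    rw [Complex.mul_conj, Complex.normSq_eq_norm_sq]
    push_cast; rfl
  exact_mod_cast this

lemma kernel_identity (n : ℕ) (hn : n ≠ 0) (w : ℂ) (hw : IsPrimitiveRoot w n) (x y : ℂ)
    (hx : ‖x‖ = 1) (hy : ‖y‖ = 1) (hxy : x ^ n ≠ y ^ n) :
    ∑ j ∈ Finset.range n, 1 / ‖w ^ j * x - y‖ ^ 2 = (n : ℝ) ^ 2 / ‖x ^ n - y ^ n‖ ^ 2 := by
  rw [← parseval_roots n hn w hw (fun k => x ^ k * y ^ (n - 1 - k)) (by simp [hx, hy]),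
    Finset.sum_div]
  refine Finset.sum_congr rfl fun j _ => ?_
  have h1 : (w ^ j * x) ^ n = x ^ n := by
    rw [mul_pow, ← pow_mul, mul_comm j, pow_mul, hw.pow_eq_one]; simp
  have h2 := geom_sum₂_mul (w ^ j * x) y n
  rw [h1] at h2
  have h3 : ∑ k ∈ Finset.range n, x ^ k * y ^ (n - 1 - k) * (w ^ j) ^ k =
      ∑ k ∈ Finset.range n, (w ^ j * x) ^ k * y ^ (n - 1 - k) :=
    Finset.sum_congr rfl fun k _ => by rw [mul_pow]; ring
  have h4 : x ^ n - y ^ n ≠ 0 := sub_ne_zero.2 hxy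
  simp only [h3]
  rw [← h2] at h4 ⊢
  have h5 := norm_ne_zero_iff.2 (left_ne_zero_of_mul h4)
  have h6 := norm_ne_zero_iff.2 (right_ne_zero_of_mul h4)
  rw [norm_mul]
  field_simp

/-! ### Energy under the power map -/

lemma gEnergy_def (p : ℝ) (f : ℂ → ℂ) : gEnergy p f =
    ∫⁻ q, ENNReal.ofReal (‖f q.1 - f q.2‖ ^ p / ‖q.1 - q.2‖ ^ 2)
      ∂(circleMeasure.prod circleMeasure) := by
  simp [gEnergy, gEnergyOn]

lemma gEnergy_congr (p : ℝ) {f g : ℂ → ℂ} (h : f =ᵐ[circleMeasure] g) :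
    gEnergy p f = gEnergy p g := by
  rw [gEnergy_def, gEnergy_def]
  refine lintegral_congr_ae ?_
  have h1 := (Measure.quasiMeasurePreserving_fst (μ := circleMeasure) (ν := circleMeasure)).ae h
  have h2 := (Measure.quasiMeasurePreserving_snd (μ := circleMeasure) (ν := circleMeasure)).ae h
  filter_upwards [h1, h2] with q hq1 hq2
  rw [hq1, hq2]

lemma ae_prod_norm : ∀ᵐ q ∂(circleMeasure.prod circleMeasure), ‖q.1‖ = 1 ∧ ‖q.2‖ = 1 := by
  have h1 := (Measure.quasiMeasurePreserving_fst (μ := circleMeasure) (ν := circleMeasure)).ae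
    circle_ae_norm
  have h2 := (Measure.quasiMeasurePreserving_snd (μ := circleMeasure) (ν := circleMeasure)).ae
    circle_ae_norm
  filter_upwards [h1, h2] with q hq1 hq2
  exact ⟨hq1, hq2⟩

lemma gEnergy_pow_measurable (p : ℝ) (hp : 1 < p) (n : ℕ) (hn : n ≠ 0) (f : ℂ → ℂ)
    (hf : Measurable f) : gEnergy p (fun x => f (x ^ n)) = n * gEnergy p f := by
  obtain ⟨w, hw⟩ : ∃ w : ℂ, IsPrimitiveRoot w n := ⟨_, Complex.isPrimitiveRoot_exp n hn⟩
  have hwn : ‖w‖ = 1 := hw.norm'_eq_one hn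
  have hwj : ∀ j : ℕ, ∀ x : ℂ, (w ^ j * x) ^ n = x ^ n := by
    intro j x
    rw [mul_pow, ← pow_mul, mul_comm j, pow_mul, hw.pow_eq_one]; simp
  have step : ∀ j : ℕ, gEnergy p (fun x => f (x ^ n)) =
      ∫⁻ q, ENNReal.ofReal (‖f (q.1 ^ n) - f (q.2 ^ n)‖ ^ p / ‖w ^ j * q.1 - q.2‖ ^ 2)
        ∂(circleMeasure.prod circleMeasure) := by
    intro j
    have hmp := (circle_rot (w ^ j) (by simp [hwn])).prod (MeasurePreserving.id circleMeasure)
    rw [gEnergy_def, ← hmp.lintegral_comp (by fun_prop)]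
    simp [hwj]
  have hnn : (n : ℝ≥0∞) * gEnergy p (fun x => f (x ^ n)) = n * (n * gEnergy p f) := by
    calc (n : ℝ≥0∞) * gEnergy p (fun x => f (x ^ n))
        = ∑ j ∈ Finset.range n, gEnergy p (fun x => f (x ^ n)) := by simp
      _ = ∑ j ∈ Finset.range n,
          ∫⁻ q, ENNReal.ofReal (‖f (q.1 ^ n) - f (q.2 ^ n)‖ ^ p / ‖w ^ j * q.1 - q.2‖ ^ 2)
            ∂(circleMeasure.prod circleMeasure) :=
          Finset.sum_congr rfl fun j _ => step j
      _ = ∫⁻ q, ∑ j ∈ Finset.range n,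
          ENNReal.ofReal (‖f (q.1 ^ n) - f (q.2 ^ n)‖ ^ p / ‖w ^ j * q.1 - q.2‖ ^ 2)
            ∂(circleMeasure.prod circleMeasure) := by
          rw [lintegral_finsetSum]
          intro j _
          fun_prop
      _ = ∫⁻ q, (n : ℝ≥0∞) ^ 2 *
          ENNReal.ofReal (‖f (q.1 ^ n) - f (q.2 ^ n)‖ ^ p / ‖q.1 ^ n - q.2 ^ n‖ ^ 2)
            ∂(circleMeasure.prod circleMeasure) := by
          refine lintegral_congr_ae ?_
          filter_upwards [ae_prod_norm] with q hq
          rw [← ENNReal.ofReal_sum_of_nonneg (fun j _ => by positivity)]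
          have hc : (n : ℝ≥0∞) ^ 2 = ENNReal.ofReal ((n : ℝ) ^ 2) := by
            rw [ENNReal.ofReal_pow (by positivity), ENNReal.ofReal_natCast]
          rw [hc, ← ENNReal.ofReal_mul (by positivity)]
          congr 1
          by_cases hxy : q.1 ^ n = q.2 ^ n
          · simp [hxy, Real.zero_rpow (by linarith : p ≠ 0)]
          · have hk := kernel_identity n hn w hw q.1 q.2 hq.1 hq.2 hxy
            simp_rw [div_eq_mul_one_div (‖f (q.1 ^ n) - f (q.2 ^ n)‖ ^ p)]
            rw [← Finset.mul_sum, hk]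
            ring
      _ = (n : ℝ≥0∞) ^ 2 * gEnergy p f := by
          rw [lintegral_const_mul _ (by fun_prop), gEnergy_def]
          congr 1
          have hmp := (circle_pow n hn).prod (circle_pow n hn)
          conv_rhs => rw [← hmp.lintegral_comp (by fun_prop)]
          simp
      _ = n * (n * gEnergy p f) := by ring
  exact (ENNReal.mul_right_inj (by exact_mod_cast hn) (by simp)).1 hnn

lemma gEnergy_pow (p : ℝ) (hp : 1 < p) (n : ℕ) (hn : n ≠ 0) (f : ℂ → ℂ)
    (hf : AEMeasurable f circleMeasure) :
    gEnergy p (fun x => f (x ^ n)) = n * gEnergy p f := by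
  rw [gEnergy_congr p hf.ae_eq_mk, ← gEnergy_pow_measurable p hp n hn _ hf.measurable_mk]
  exact gEnergy_congr p ((circle_pow n hn).quasiMeasurePreserving.ae_eq hf.ae_eq_mk)

lemma gSeminorm_pow (p : ℝ) (hp : 1 < p) (n : ℕ) (hn : n ≠ 0) (f : ℂ → ℂ)
    (hf : AEMeasurable f circleMeasure) :
    gSeminorm p (fun x => f (x ^ n)) = (n : ℝ) ^ (1 / p) * gSeminorm p f := by
  rw [gSeminorm, gEnergy_pow p hp n hn f hf, ENNReal.toReal_mul, ENNReal.toReal_natCast,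
    Real.mul_rpow (by positivity) ENNReal.toReal_nonneg, gSeminorm]

/-! ### Degree under the power map -/

lemma lift_extend (g : ℂ → ℂ) (d : ℤ) (φ : ℝ → ℝ)
    (hφ : ContinuousOn φ (Set.Icc 0 (2 * Real.pi)))
    (hl : ∀ θ ∈ Set.Icc 0 (2 * Real.pi),
        g (Complex.exp (θ * Complex.I)) = Complex.exp (φ θ * Complex.I))
    (hd : φ (2 * Real.pi) - φ 0 = 2 * Real.pi * d) (n : ℕ) :
    ∃ ψ : ℝ → ℝ, Continuous ψ ∧ ψ 0 = φ 0 ∧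
      (∀ t, 2 * Real.pi * n ≤ t → ψ t = φ 0 + 2 * Real.pi * (n * d)) ∧
      (∀ t, 0 ≤ t → t ≤ 2 * Real.pi * n →
        g (Complex.exp (t * Complex.I)) = Complex.exp (ψ t * Complex.I)) := by
  have hpi := Real.two_pi_pos
  have h0 : φ 0 - φ 0 = 0 := sub_self _
  have hg0 : g 1 = Complex.exp (φ 0 * Complex.I) := by
    have := hl 0 ⟨le_rfl, hpi.le⟩
    simpa using this
  induction n with
  | zero =>
    refine ⟨fun _ => φ 0, continuous_const, rfl, by simp, ?_⟩
    intro t ht ht'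
    have : t = 0 := le_antisymm (by simpa using ht') ht
    simp [this, hg0]
  | succ n ih =>
    obtain ⟨ψ, hc, hz, hbig, hlift⟩ := ih
    have hce : Continuous (Set.IccExtend hpi.le ((Set.Icc 0 (2 * Real.pi)).domRestrict φ)) :=
      (continuousOn_iff_continuous_domRestrict.1 hφ).Icc_extend'
    set E := Set.IccExtend hpi.le ((Set.Icc 0 (2 * Real.pi)).domRestrict φ) with hE
    have hE0 : ∀ t, t ≤ 0 → E t = φ 0 := by
      intro t ht
      rw [hE, Set.IccExtend_of_le_left _ _ ht]; rfl
    have hE1 : ∀ t, 2 * Real.pi ≤ t → E t = φ (2 * Real.pi) := by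
      intro t ht
      rw [hE, Set.IccExtend_of_right_le _ _ ht]; rfl
    have hE2 : ∀ t, t ∈ Set.Icc 0 (2 * Real.pi) → E t = φ t := by
      intro t ht
      rw [hE, Set.IccExtend_of_mem _ _ ht]; rfl
    have hnn : 0 ≤ 2 * Real.pi * (n : ℝ) := by positivity
    refine ⟨fun t => ψ t + (E (t - 2 * Real.pi * n) - φ 0), by fun_prop, ?_, ?_, ?_⟩
    · simp only []
      rw [hE0 _ (by linarith), hz]; ring
    · intro t ht
      push_cast at ht ⊢
      rw [hE1 _ (by linarith), hbig _ (by linarith)]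
      linear_combination hd
    · intro t ht ht'
      push_cast at ht'
      simp only []
      rcases le_total t (2 * Real.pi * n) with h | h
      · rw [hE0 _ (by linarith), h0, add_zero]
        exact hlift t ht h
      · have hm : t - 2 * Real.pi * n ∈ Set.Icc 0 (2 * Real.pi) :=
          ⟨by linarith, by linarith⟩
        have h1 := hl _ hm
        rw [hE2 _ hm, hbig _ h]
        have e1 : Complex.exp (((t - 2 * Real.pi * n : ℝ) : ℂ) * Complex.I) =
            Complex.exp (t * Complex.I) := by
          rw [Complex.exp_eq_exp_iff_exists_int]
          exact ⟨-n, by push_cast; ring⟩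
        rw [e1] at h1
        rw [h1, Complex.exp_eq_exp_iff_exists_int]
        exact ⟨-(n * d), by push_cast; ring⟩

lemma HasDegree.pow {g : ℂ → ℂ} {d : ℤ} (h : HasDegree g d) (n : ℕ) :
    HasDegree (fun x => g (x ^ n)) (n * d) := by
  obtain ⟨hc, hm, φ, hφ, hl, hd⟩ := h
  have hmaps : Set.MapsTo (fun x : ℂ => x ^ n) unitCircle unitCircle := by
    intro x hx
    simp only [unitCircle, mem_sphere_zero_iff_norm] at hx ⊢
    simp [hx]
  obtain ⟨ψ, hψ, hz, hbig, hlift⟩ := lift_extend g d φ hφ hl hd n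
  refine ⟨hc.comp (by fun_prop) hmaps, fun z hz => hm _ (hmaps hz), fun t => ψ (n * t),
    by fun_prop, ?_, ?_⟩
  · intro θ hθ
    have h1 := hlift (n * θ) (mul_nonneg (by positivity) hθ.1) (by
      rw [mul_comm (2 * Real.pi)]; exact mul_le_mul_of_nonneg_left hθ.2 (by positivity))
    simp only []
    rw [← h1, ← Complex.exp_nat_mul]
    congr 2
    push_cast; ring
  · simp only []
    rw [hbig _ (by rw [mul_comm]), mul_zero, hz]
    push_cast; ring

lemma HasDegree.conj {g : ℂ → ℂ} {d : ℤ} (h : HasDegree g d) :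
    HasDegree (fun x => (starRingEnd ℂ) (g x)) (-d) := by
  obtain ⟨hc, hm, φ, hφ, hl, hd⟩ := h
  refine ⟨Complex.continuous_conj.comp_continuousOn hc, fun z hz => ?_, fun t => - φ t,
    hφ.neg, ?_, ?_⟩
  · have := hm z hz
    simp only [unitCircle, mem_sphere_zero_iff_norm] at this ⊢
    simpa using this
  · intro θ hθ
    simp only []
    rw [hl θ hθ, ← Complex.exp_conj]
    simp
  · push_cast; linarith

lemma HasDegree.aemeasurable {g : ℂ → ℂ} {d : ℤ} (h : HasDegree g d) :
    AEMeasurable g circleMeasure := by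
  rw [← circle_restrict]
  exact h.1.aemeasurable Metric.isClosed_sphere.measurableSet

/-! ### The classes -/

lemma gEnergy_const (p : ℝ) (hp : 1 < p) (c : ℂ) : gEnergy p (fun _ => c) = 0 := by
  rw [gEnergy_def]
  simp [Real.zero_rpow (by linarith : p ≠ 0)]

lemma gSeminorm_const (p : ℝ) (hp : 1 < p) (c : ℂ) : gSeminorm p (fun _ => c) = 0 := by
  rw [gSeminorm, gEnergy_const p hp, ENNReal.toReal_zero, Real.zero_rpow]
  have : 0 < p := by linarith
  positivity

lemma gSeminorm_nonneg (p : ℝ) (f : ℂ → ℂ) : 0 ≤ gSeminorm p f :=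
  Real.rpow_nonneg ENNReal.toReal_nonneg _

lemma HasDegree.mem_classE {p : ℝ} (hp : 1 < p) {g : ℂ → ℂ} {d : ℤ} (h : HasDegree g d)
    (hE : gEnergy p g ≠ ⊤) : g ∈ classE p d := by
  refine ⟨h.aemeasurable, ?_, hE, fun _ => g, fun _ => ⟨h, hE⟩, ?_, ?_⟩
  · filter_upwards [circle_ae_norm] with x hx
    have := h.2.1 x (by simp [unitCircle, hx])
    simpa [unitCircle] using this
  · simp [Real.zero_rpow (by linarith : p ≠ 0)]
  · simp only [sub_self]
    rw [gSeminorm_const p hp]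
    exact tendsto_const_nhds

lemma classE_pow {p : ℝ} (hp : 1 < p) {d : ℤ} {n : ℕ} (hn : n ≠ 0) {f : ℂ → ℂ}
    (hf : f ∈ classE p d) : (fun x => f (x ^ n)) ∈ classE p (n * d) := by
  obtain ⟨hm, hnorm, hE, g, hg, hL, hS⟩ := hf
  have hmp := circle_pow n hn
  refine ⟨hm.comp_quasiMeasurePreserving hmp.quasiMeasurePreserving, hmp.quasiMeasurePreserving.ae hnorm, ?_,
    fun k x => g k (x ^ n), fun k => ⟨(hg k).1.pow n, ?_⟩, ?_, ?_⟩
  · rw [gEnergy_pow p hp n hn f hm]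
    exact ENNReal.mul_ne_top (by simp) hE
  · rw [gEnergy_pow p hp n hn _ (hg k).1.aemeasurable]
    exact ENNReal.mul_ne_top (by simp) (hg k).2
  · convert hL using 2 with k
    have hfg := hm.sub (hg k).1.aemeasurable
    conv_rhs => rw [← hmp.map_eq]
    rw [integral_map hmp.aemeasurable]
    rw [hmp.map_eq]
    exact (hfg.norm.pow_const p).aestronglyMeasurable
  · have := hS.const_mul ((n : ℝ) ^ (1 / p))
    rw [mul_zero] at this
    convert this using 2 with k
    exact gSeminorm_pow p hp n hn (fun x => f x - g k x) (hm.sub (hg k).1.aemeasurable)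

lemma gEnergy_conj (p : ℝ) (f : ℂ → ℂ) :
    gEnergy p (fun x => (starRingEnd ℂ) (f x)) = gEnergy p f := by
  rw [gEnergy_def, gEnergy_def]
  simp only [← map_sub, RCLike.norm_conj]

lemma gSeminorm_conj (p : ℝ) (f : ℂ → ℂ) :
    gSeminorm p (fun x => (starRingEnd ℂ) (f x)) = gSeminorm p f := by
  rw [gSeminorm, gEnergy_conj, gSeminorm]

lemma classE_conj {p : ℝ} {d : ℤ} {f : ℂ → ℂ}
    (hf : f ∈ classE p d) : (fun x => (starRingEnd ℂ) (f x)) ∈ classE p (-d) := by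
  obtain ⟨hm, hnorm, hE, g, hg, hL, hS⟩ := hf
  refine ⟨Complex.continuous_conj.measurable.comp_aemeasurable hm, ?_, ?_,
    fun k x => (starRingEnd ℂ) (g k x), fun k => ⟨(hg k).1.conj, ?_⟩, ?_, ?_⟩
  · simpa only [RCLike.norm_conj] using hnorm
  · rwa [gEnergy_conj]
  · rw [gEnergy_conj]; exact (hg k).2
  · simpa only [← map_sub, RCLike.norm_conj] using hL
  · simp only [← map_sub]
    simpa only [gSeminorm_conj p (fun x => f x - g _ x)] using hS

/-! ### The identity has finite energy -/

lemma integrableOn_abs_rpow (r : ℝ) (hr : -1 < r) :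
    IntegrableOn (fun t : ℝ => |t| ^ r) (Set.Ioc (-Real.pi) (-Real.pi + 2 * Real.pi)) := by
  have hpi := Real.pi_pos
  have h1 : IntervalIntegrable (fun t : ℝ => |t| ^ r) volume 0 Real.pi := by
    refine (intervalIntegral.intervalIntegrable_rpow' hr (a := 0) (b := Real.pi)).congr ?_
    intro t ht
    rw [Set.uIoc_of_le hpi.le] at ht
    simp [abs_of_pos ht.1]
  have h2 : IntervalIntegrable (fun t : ℝ => |t| ^ r) volume (-Real.pi) 0 := by
    have := ((IntervalIntegrable.iff_comp_neg (by finiteness)).1 h1).symm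
    simpa using this
  have h3 := h2.trans h1
  rw [intervalIntegrable_iff_integrableOn_Ioc_of_le (by linarith)] at h3
  have e : -Real.pi + 2 * Real.pi = Real.pi := by ring
  rwa [e]

lemma one_sub_energy (p : ℝ) (hp : 1 < p) :
    ∫⁻ z, ENNReal.ofReal (‖1 - z‖ ^ p / ‖1 - z‖ ^ 2) ∂circleMeasure < ⊤ := by
  have hpi := Real.pi_pos
  rw [← (circle_push (-Real.pi)).lintegral_comp (by fun_prop)]
  have hI := ((integrableOn_abs_rpow (p - 2) (by linarith)).const_mul ((Real.pi / 2) ^ 2))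
  refine lt_of_le_of_lt ?_ hI.lintegral_lt_top
  refine setLIntegral_mono' measurableSet_Ioc fun t ht => ENNReal.ofReal_le_ofReal ?_
  have hta : |t| ≤ Real.pi := abs_le.2 ⟨ht.1.le, by linarith [ht.2]⟩
  by_cases h0 : t = 0
  · subst h0
    simp only [Complex.ofReal_zero, zero_mul, Complex.exp_zero, sub_self, norm_zero]
    rw [Real.zero_rpow (by linarith), zero_div]
    positivity
  have htpos : 0 < |t| := abs_pos.2 h0
  have hs : ‖1 - Complex.exp (t * Complex.I)‖ = 2 * |Real.sin (t / 2)| := by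
    rw [norm_sub_rev, mul_comm, Complex.norm_exp_I_mul_ofReal_sub_one]
    simp
  have hup : ‖1 - Complex.exp (t * Complex.I)‖ ≤ |t| := by
    rw [hs]
    have := Real.abs_sin_le_abs (x := t / 2)
    rw [abs_div, abs_two] at this
    linarith
  have hlo : 2 / Real.pi * |t| ≤ ‖1 - Complex.exp (t * Complex.I)‖ := by
    rw [hs]
    have := Real.mul_abs_le_abs_sin (x := t / 2) (by rw [abs_div, abs_two]; linarith)
    rw [abs_div, abs_two] at this
    linarith
  calc ‖1 - Complex.exp (t * Complex.I)‖ ^ p / ‖1 - Complex.exp (t * Complex.I)‖ ^ 2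
      ≤ |t| ^ p / (2 / Real.pi * |t|) ^ 2 := by gcongr
    _ = (Real.pi / 2) ^ 2 * |t| ^ (p - 2) := by
      rw [Real.rpow_sub htpos, Real.rpow_two]
      field_simp

lemma gEnergy_id (p : ℝ) (hp : 1 < p) : gEnergy p (fun x => x) ≠ ⊤ := by
  rw [gEnergy_def, lintegral_prod _ (by fun_prop)]
  have : ∀ᵐ x ∂circleMeasure,
      ∫⁻ y, ENNReal.ofReal (‖x - y‖ ^ p / ‖x - y‖ ^ 2) ∂circleMeasure =
      ∫⁻ z, ENNReal.ofReal (‖1 - z‖ ^ p / ‖1 - z‖ ^ 2) ∂circleMeasure := by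
    filter_upwards [circle_ae_norm] with x hx
    rw [← (circle_rot x hx).lintegral_comp (by fun_prop)]
    have : ∀ z, ‖x - x * z‖ = ‖1 - z‖ := by
      intro z
      rw [← mul_one_sub, norm_mul, hx, one_mul]
    simp only [this]
  rw [lintegral_congr_ae this, lintegral_const]
  exact ENNReal.mul_ne_top (one_sub_energy p hp).ne (measure_ne_top _ _)

lemma hasDegree_id : HasDegree (fun x => x) 1 :=
  ⟨continuousOn_id, fun z hz => hz, fun t => t, continuousOn_id, fun _ _ => rfl, by simp⟩

lemma hasDegree_one : HasDegree (fun _ => 1) 0 :=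
  ⟨continuousOn_const, fun z hz => by simp [unitCircle], fun _ => 0, continuousOn_const,
    fun _ _ => by simp, by simp⟩

lemma sigmaP_nonneg (p : ℝ) (d : ℤ) : 0 ≤ sigmaP p d := by
  apply Real.sInf_nonneg
  rintro _ ⟨f, _, rfl⟩
  exact gSeminorm_nonneg p f

lemma sigmaP_le {p : ℝ} {d : ℤ} {f : ℂ → ℂ} (hf : f ∈ classE p d) :
    sigmaP p d ≤ gSeminorm p f :=
  csInf_le ⟨0, by rintro _ ⟨f, _, rfl⟩; exact gSeminorm_nonneg p f⟩ ⟨f, hf, rfl⟩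

lemma sigmaP_nat_le (p : ℝ) (hp : 1 < p) (n : ℕ) (hn : n ≠ 0) (d : ℤ) (hd : d = n ∨ d = -n) :
    sigmaP p d ≤ (n : ℝ) ^ (1 / p) * sigmaP p 1 := by
  have hpos : 0 < (n : ℝ) ^ (1 / p) := Real.rpow_pos_of_pos (by positivity) _
  rw [← div_le_iff₀' hpos]
  refine le_csInf ⟨_, _, hasDegree_id.mem_classE hp (gEnergy_id p hp), rfl⟩ ?_
  rintro _ ⟨f, hf, rfl⟩
  rw [div_le_iff₀' hpos, ← gSeminorm_pow p hp n hn f hf.1]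
  have h := classE_pow hp hn hf
  rw [mul_one] at h
  rcases hd with rfl | rfl
  · exact sigmaP_le h
  · rw [← gSeminorm_conj]
    exact sigmaP_le (classE_conj h)

/-- **Remark 1.3.** `σ_p^p(d) ≤ |d| σ_p^p(1)` for every `d ∈ ℤ`. -/
theorem sigma_pow_le (p : ℝ) (hp : 1 < p) (d : ℤ) :
    sigmaP p d ^ p ≤ (|d| : ℝ) * sigmaP p 1 ^ p := by
  have hp0 : p ≠ 0 := by linarith
  by_cases hd : d = 0
  · subst hd
    have h : sigmaP p 0 = 0 := by
      refine le_antisymm ?_ (sigmaP_nonneg p 0)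
      rw [← gSeminorm_const p hp 1]
      exact sigmaP_le (hasDegree_one.mem_classE hp (by rw [gEnergy_const p hp]; simp))
    rw [h, Real.zero_rpow hp0]
    simp
  · have h := sigmaP_nat_le p hp d.natAbs (by simpa using hd) d (Int.natAbs_eq d)
    have hc : ((d.natAbs : ℕ) : ℝ) = |(d : ℝ)| := by
      rw [Nat.cast_natAbs]; push_cast; rfl
    rw [hc] at h
    calc sigmaP p d ^ p ≤ (|(d : ℝ)| ^ (1 / p) * sigmaP p 1) ^ p :=
          Real.rpow_le_rpow (sigmaP_nonneg p d) h (by linarith)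
      _ = |(d : ℝ)| * sigmaP p 1 ^ p := by
          rw [Real.mul_rpow (by positivity) (sigmaP_nonneg p 1), ← Real.rpow_mul (abs_nonneg _),
            one_div_mul_cancel hp0, Real.rpow_one]
end
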